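/- Let $R_1, R_2$ be commutative local rings with unity whose maximal ideals are principal, generated by $a$ and $b$ respectively, each with nilpotent index $3$ (i.e., $a^2 \neq 0$, $a^3 = 0$, $b^2 \neq 0$, $b^3 = 0$). Then $\Gamma_r(R_1 \times R_2)$ contains $K_{4,4}$ as a subgraph, with parts $\{R_1\times(0),\ (a)\times(0),\ R_1\times(b^2),\ (a)\times(b^2)\}$ and $\{(0)\times R_2,\ (0)\times(b),\ (a^2)\times R_2,\ (a^2)\times(b)\}$. -/

import Mathlib

/-- Adjacency in the reduced cozero-divisor graph `Γ_r(R)`: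
the two ideals are nontrivial principal ideals (vertices of the graph),
they are distinct, and neither is properly contained in the other. -/
def redCozeroAdj {R : Type*} [CommRing R] (I J : Ideal R) : Prop :=
  (I.IsPrincipal ∧ I ≠ ⊥ ∧ I ≠ ⊤) ∧ (J.IsPrincipal ∧ J ≠ ⊥ ∧ J ≠ ⊤) ∧
    I ≠ J ∧ ¬ I < J ∧ ¬ J < I

theorem aux_nd {R : Type*} [CommRing R] (a : R) (h2 : a ^ 2 ≠ 0) (h3 : a ^ 3 = 0) :
    a ≠ 0 ∧ (1 : R) ≠ 0 ∧ ¬ a ∣ 1 ∧ ¬ a ^ 2 ∣ a ∧ ¬ a ^ 2 ∣ 1 := by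
  refine ⟨?_, ?_, ?_, ?_, ?_⟩
  · rintro rfl; simp at h2
  · intro h; apply h2; rw [← one_mul (a ^ 2), h, zero_mul]
  · rintro ⟨c, hc⟩; apply h2; linear_combination a ^ 2 * hc + c * h3
  · rintro ⟨c, hc⟩; apply h2; linear_combination a * hc + c * h3
  · rintro ⟨c, hc⟩; apply h2; linear_combination a ^ 2 * hc + a * c * h3

theorem aux_le {R S : Type*} [CommRing R] [CommRing S] (x x' : R) (y y' : S) :
    Ideal.span {(x, y)} ≤ Ideal.span {(x', y')} ↔ x' ∣ x ∧ y' ∣ y := by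
  rw [Ideal.span_singleton_le_span_singleton, Prod.mk_dvd_mk]

theorem aux_adj {R S : Type*} [CommRing R] [CommRing S] (x x' : R) (y y' : S)
    (h1 : ¬ x' ∣ x) (h2 : ¬ y ∣ y') :
    redCozeroAdj (Ideal.span {(x, y)}) (Ideal.span {(x', y')}) := by
  have l1 : ¬ Ideal.span {(x, y)} ≤ Ideal.span {(x', y')} := by rw [aux_le]; tauto
  have l2 : ¬ Ideal.span {(x', y')} ≤ Ideal.span {(x, y)} := by rw [aux_le]; tauto
  refine ⟨⟨⟨_, rfl⟩, ?_, ?_⟩, ⟨⟨_, rfl⟩, ?_, ?_⟩, ?_, fun h => l1 h.le, fun h => l2 h.le⟩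
  · intro h; exact l1 (h ▸ bot_le)
  · intro h; exact l2 (h ▸ le_top)
  · intro h; exact l2 (h ▸ bot_le)
  · intro h; exact l1 (h ▸ le_top)
  · intro h; exact l1 h.le

/-- Let `R₁, R₂` be commutative local rings whose maximal ideals are principal,
generated by `a` resp. `b`, each with nilpotent index `3`.  Then
`Γ_r(R₁ × R₂)` contains `K_{4,4}` as a subgraph with parts
`{R₁×(0), (a)×(0), R₁×(b²), (a)×(b²)}` and
`{(0)×R₂, (0)×(b), (a²)×R₂, (a²)×(b)}`. -/
theorem stmt15 (R₁ R₂ : Type*) [CommRing R₁] [CommRing R₂]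
    [IsLocalRing R₁] [IsLocalRing R₂]
    (a : R₁) (hmaxa : IsLocalRing.maximalIdeal R₁ = Ideal.span {a})
    (ha2 : a ^ 2 ≠ 0) (ha3 : a ^ 3 = 0)
    (b : R₂) (hmaxb : IsLocalRing.maximalIdeal R₂ = Ideal.span {b})
    (hb2 : b ^ 2 ≠ 0) (hb3 : b ^ 3 = 0)
    (A B : Fin 4 → Ideal (R₁ × R₂))
    (hA : A = ![Ideal.span {((1 : R₁), (0 : R₂))}, Ideal.span {(a, (0 : R₂))},
                Ideal.span {((1 : R₁), b ^ 2)}, Ideal.span {(a, b ^ 2)}])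
    (hB : B = ![Ideal.span {((0 : R₁), (1 : R₂))}, Ideal.span {((0 : R₁), b)},
                Ideal.span {(a ^ 2, (1 : R₂))}, Ideal.span {(a ^ 2, b)}]) :
    Function.Injective A ∧ Function.Injective B ∧ (∀ i j, A i ≠ B j) ∧
      ∀ i j, redCozeroAdj (A i) (B j) := by
  obtain ⟨a0, a1, a2, a3, a4⟩ := aux_nd a ha2 ha3
  obtain ⟨b0, b1, b2, b3, b4⟩ := aux_nd b hb2 hb3
  have adj : ∀ i j, redCozeroAdj (A i) (B j) := by
    subst hA hB
    intro i j
    fin_cases i <;> fin_cases j <;> apply aux_adj <;>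
      first | assumption | (rw [zero_dvd_iff]; assumption)
  refine ⟨?_, ?_, fun i j => (adj i j).2.2.1, adj⟩
  · subst hA
    intro i j h
    have h1 := h.le
    have h2 := h.ge
    fin_cases i <;> fin_cases j <;> try rfl
    all_goals
      exfalso
      replace h1 := (aux_le _ _ _ _).1 h1
      replace h2 := (aux_le _ _ _ _).1 h2
      try simp only [zero_dvd_iff] at h1 h2
      tauto
  · subst hB
    intro i j h
    have h1 := h.le
    have h2 := h.ge
    fin_cases i <;> fin_cases j <;> try rfl
    all_goals
      exfalso
      replace h1 := (aux_le _ _ _ _).1 h1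
      replace h2 := (aux_le _ _ _ _).1 h2
      try simp only [zero_dvd_iff] at h1 h2
      tauto
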